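/- Let G be an infinite discrete semigroup of cardinality η that is weakly cancellative and right cancellative. Then there exists a family (x_i)_{i∈I} of non-principal ultrafilters in βG ∖ G, indexed by a set I of cardinality 2^(2^η), such that the principal left ideals βG·x_i = {p·x_i : p ∈ βG} are pairwise disjoint: (βG·x_i) ∩ (βG·x_j) = ∅ whenever i ≠ j. -/

import Mathlib

/-!
STATEMENT 13.  `G` an infinite discrete semigroup of cardinality `η`, weakly
cancellative and right cancellative.  There is a family `(x_i)_{i ∈ I}` of
non-principal ultrafilters in `βG ∖ G`, with `#I = 2 ^ (2 ^ η)`, whose principal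
left ideals `βG · x_i = {p · x_i : p ∈ βG}` are pairwise disjoint.
-/

universe u

/-- The extension to `βG` of the multiplication of a discrete semigroup `G`:
`A ∈ umul p q ↔ {s | {t | s * t ∈ A} ∈ q} ∈ p`. -/
def umul {G : Type*} [Semigroup G] (p q : Ultrafilter G) : Ultrafilter G :=
  p.bind fun s => q.map fun t => s * t

open Filter Cardinal

/-- Points separating finitely many sets, with prescribed membership pattern. -/
theorem exists_pattern {K : Type u} (S : Set (Set K)) (Φ : Finset (Set K)) :
    ∃ x : Finset K × Set (Finset K), x.2.Finite ∧
      ∀ A ∈ Φ, ({k ∈ (x.1 : Set K) | k ∈ A} ∈ (fun F : Finset K => (F : Set K)) '' x.2 ↔ A ∈ S) := by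
  classical
  have hd : ∀ A B : Set K, ∃ F : Finset K, A ≠ B → ∃ k ∈ F, ¬ (k ∈ A ↔ k ∈ B) := by
    intro A B
    by_cases h : A = B
    · exact ⟨∅, fun h' => (h' h).elim⟩
    · have : ∃ k, ¬ (k ∈ A ↔ k ∈ B) := by
        by_contra hc
        push Not at hc
        exact h (Set.ext hc)
      obtain ⟨k, hk⟩ := this
      exact ⟨{k}, fun _ => ⟨k, by simp, hk⟩⟩
  choose d hd using hd
  let F : Finset K := Φ.biUnion fun A => Φ.biUnion fun B => d A B
  have hF : ∀ A ∈ Φ, ∀ B ∈ Φ, (∀ k ∈ F, (k ∈ A ↔ k ∈ B)) → A = B := by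
    intro A hA B hB h
    by_contra hne
    obtain ⟨k, hk, hk'⟩ := hd A B hne
    exact hk' (h k (by
      simp only [F, Finset.mem_biUnion]
      exact ⟨A, hA, B, hB, hk⟩))
  refine ⟨(F, (fun A : Set K => F.filter (fun k => k ∈ A)) '' {A | A ∈ Φ ∧ A ∈ S}), ?_, ?_⟩
  · exact (Φ.finite_toSet.subset (fun A h => h.1)).image _
  · intro A hA
    constructor
    · rintro ⟨_, ⟨B, ⟨hB, hBS⟩, rfl⟩, h⟩
      have : A = B := hF A hA B hB (by
        intro k hk
        have := Set.ext_iff.1 h k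
        simp at this
        tauto)
      exact this ▸ hBS
    · intro hAS
      refine ⟨_, ⟨A, ⟨hA, hAS⟩, rfl⟩, ?_⟩
      ext k
      simp

/-- `2 ^ 2 ^ #K` many ultrafilters finer than `atTop`. -/
theorem exists_ultra {K : Type u} [LinearOrder K] [Infinite K]
    (hK : ∀ i : K, #(Set.Iio i) < #K) :
    ∃ u : Set (Set K) → Ultrafilter K, Function.Injective u ∧ ∀ S, (u S : Filter K) ≤ atTop := by
  classical
  let X := Finset K × Finset (Finset K)
  have hX : #(X × K) = #K := by
    simp [X]
  obtain ⟨e⟩ := Cardinal.eq.1 hX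
  have hcof : ∀ (x : X) (b : K), ∃ a, b ≤ a ∧ (e.symm a).1 = x := by
    intro x b
    by_contra! hc
    have : #K ≤ #(Set.Iio b) := by
      refine Cardinal.mk_le_of_injective (f := fun k => ⟨e (x, k), ?_⟩) ?_
      · by_contra h
        exact hc (e (x, k)) (not_lt.1 h) (by simp)
      · intro k l h
        simpa using h
    exact absurd (hK b) (not_lt.2 this)
  choose c hc1 hc2 using hcof
  let P : Set K → Set K := fun A =>
    {a | (e.symm a).1.1.filter (fun k => k ∈ A) ∈ (e.symm a).1.2}
  have hpt : ∀ (S : Set (Set K)) (Φ : Finset (Set K)), ∃ x : X, ∀ A ∈ Φ,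
      (x.1.filter (fun k => k ∈ A) ∈ x.2 ↔ A ∈ S) := by
    intro S Φ
    obtain ⟨⟨F, T⟩, hT, h⟩ := exists_pattern S Φ
    refine ⟨(F, hT.toFinset), fun A hA => ?_⟩
    rw [← h A hA]
    simp only [Set.Finite.mem_toFinset, Set.mem_image]
    constructor
    · intro h
      exact ⟨_, h, by ext; simp⟩
    · rintro ⟨Q, hQ, hQ'⟩
      convert hQ
      apply Finset.coe_injective
      rw [hQ']
      ext; simp
  choose pt hpt using hpt
  let u : Set (Set K) → Ultrafilter K := fun S =>
    (Ultrafilter.of (atTop : Filter (Finset (Set K) × K))).map (fun y => c (pt S y.1) y.2)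
  have hmem : ∀ S A, P A ∈ u S ↔ A ∈ S := by
    have key : ∀ S A, ∀ᶠ y in (Ultrafilter.of (atTop : Filter (Finset (Set K) × K)) : Filter (Finset (Set K) × K)),
        (c (pt S y.1) y.2 ∈ P A ↔ A ∈ S) := by
      intro S A
      refine Ultrafilter.of_le _ ?_
      obtain ⟨b⟩ : Nonempty K := inferInstance
      filter_upwards [eventually_ge_atTop (({A}, b) : Finset (Set K) × K)] with y hy
      simp only [P, Set.mem_setOf_eq, hc2]
      exact hpt S y.1 A (hy.1 (by simp))
    intro S A
    change (∀ᶠ y in (Ultrafilter.of (atTop : Filter (Finset (Set K) × K)) : Filter (Finset (Set K) × K)),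
        c (pt S y.1) y.2 ∈ P A) ↔ A ∈ S
    rw [eventually_congr (key S A)]
    simp
  refine ⟨u, ?_, ?_⟩
  · intro S S' h
    ext A
    rw [← hmem S, ← hmem S', h]
  · intro S
    change Tendsto _ _ _
    rw [tendsto_atTop]
    intro b
    refine Ultrafilter.of_le _ ?_
    filter_upwards [eventually_ge_atTop ((∅, b) : Finset (Set K) × K)] with y hy
    exact hy.2.trans (hc1 _ _)

theorem exists_thin {G K : Type u} [Semigroup G] [LinearOrder K] [WellFoundedLT K] [Infinite K]
    (hK : ∀ i : K, #(Set.Iio i) < #K) (s : K ≃ G)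
    (hwc : ∀ s t : G, {u : G | s * u = t}.Finite) :
    ∃ t : K → G, ∀ a d, d < a → ∀ b ≤ a, ∀ c ≤ a, s b * t a ≠ s c * t d := by
  classical
  have hstep : ∀ (a : K) (f : ∀ d, d < a → G), ∃ g : G, ∀ d (h : d < a), ∀ b ≤ a, ∀ c ≤ a,
      s b * g ≠ s c * f d h := by
    intro a f
    by_contra! hc
    let J := Set.Iic a × Set.Iic a × Set.Iio a
    let B : J → Set G := fun j => {g | s j.1.1 * g = s j.2.1.1 * f j.2.2.1 j.2.2.2}
    have hB : ∀ j, (B j).Finite := fun j => hwc _ _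
    have hU : (⋃ j, B j) = Set.univ := by
      refine Set.eq_univ_of_forall fun g => ?_
      obtain ⟨d, h, b, hb, c, hc, e⟩ := hc g
      exact Set.mem_iUnion.2 ⟨(⟨b, hb⟩, ⟨c, hc⟩, ⟨d, h⟩), e⟩
    have hGK : #G = #K := (Cardinal.mk_congr s).symm
    have hIic : #(Set.Iic a) < #K := by
      have : Set.Iic a = insert a (Set.Iio a) := by
        ext x; simp [le_iff_eq_or_lt]
      rw [this]
      refine (Cardinal.mk_insert_le).trans_lt ?_
      exact Cardinal.add_lt_of_lt (Cardinal.aleph0_le_mk K) (hK a)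
        (Cardinal.one_lt_aleph0.trans_le (Cardinal.aleph0_le_mk K))
    have hJ : #J < #K := by
      simp only [J, Cardinal.mk_prod, Cardinal.lift_id]
      exact Cardinal.mul_lt_of_lt (Cardinal.aleph0_le_mk K) hIic
        (Cardinal.mul_lt_of_lt (Cardinal.aleph0_le_mk K) hIic (hK a))
    have : #G < #G := by
      conv_lhs => rw [← Cardinal.mk_univ, ← hU]
      rw [hGK]
      rcases lt_or_ge #J ℵ₀ with hfin | hinf
      · have : Finite J := Cardinal.lt_aleph0_iff_finite.1 hfin
        exact (Set.Finite.lt_aleph0 (Set.finite_iUnion hB)).trans_le (Cardinal.aleph0_le_mk K)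
      · refine lt_of_le_of_lt ?_ hJ
        refine (Cardinal.mk_iUnion_le B).trans ?_
        refine (mul_le_mul' le_rfl (ciSup_le' fun j => ((hB j).lt_aleph0).le)).trans ?_
        rw [Cardinal.mul_aleph0_eq hinf]
    exact lt_irrefl _ this
  choose F hF using hstep
  refine ⟨WellFoundedLT.fix F, fun a d hd b hb c hc => ?_⟩
  rw [WellFoundedLT.fix_eq F a]
  exact hF a _ d hd b hb c hc

theorem mem_umul {G : Type*} [Semigroup G] (p q : Ultrafilter G) (A : Set G)
    (h : ∀ s, ∀ᶠ t in (q : Filter G), s * t ∈ A) : A ∈ umul p q := by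
  change A ∈ Filter.bind (p : Filter G) fun s => ((q.map fun t => s * t : Ultrafilter G) : Filter G)
  rw [Filter.mem_bind']
  exact Filter.univ_mem' h

theorem stmt13 {G : Type u} [Semigroup G] [Infinite G]
    (hwc : ∀ s t : G, {u : G | s * u = t}.Finite ∧ {u : G | u * s = t}.Finite)
    (hrc : ∀ u v s : G, u * s = v * s → u = v)
    (η : Cardinal.{u}) (hcard : Cardinal.mk G = η) :
    ∃ (I : Type u) (x : I → Ultrafilter G),
      Cardinal.mk I = (2 : Cardinal.{u}) ^ ((2 : Cardinal.{u}) ^ η) ∧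
      (∀ i, x i ∉ Set.range (pure : G → Ultrafilter G)) ∧
      ∀ i j, i ≠ j →
        Disjoint (Set.range fun p => umul p (x i))
          (Set.range fun p => umul p (x j)) := by
  subst hcard
  let K := (#G).ord.ToType
  have hKG : #K = #G := Cardinal.mk_ord_toType _
  have : Infinite K := Cardinal.infinite_iff.2 (hKG ▸ Cardinal.aleph0_le_mk G)
  have : NoMaxOrder K := Cardinal.noMaxOrder (Cardinal.aleph0_le_mk G)
  have hK : ∀ i : K, #(Set.Iio i) < #K := fun i => by
    rw [hKG]; exact Cardinal.mk_Iio_toType_ord_lt i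
  obtain ⟨s⟩ := Cardinal.eq.1 hKG
  obtain ⟨t, ht⟩ := exists_thin hK s (fun s t => (hwc s t).1)
  obtain ⟨v, hv, hv'⟩ := exists_ultra hK
  have htinj : ∀ a b, t a = t b → a = b := by
    intro a b h
    rcases lt_trichotomy a b with hab | hab | hab
    · exact (ht b a hab a hab.le a hab.le (by rw [h])).elim
    · exact hab
    · exact (ht a b hab a le_rfl a le_rfl (by rw [h])).elim
  refine ⟨Set (Set K), fun S => (v S).map t, ?_, ?_, ?_⟩
  · rw [Cardinal.mk_set, Cardinal.mk_set, hKG]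
  · rintro S ⟨g, hg⟩
    have hg : pure g = (v S).map t := hg
    have h1 : ∀ᶠ a in (v S : Filter K), t a = g := by
      have : {g} ∈ (v S).map t := by rw [← hg]; simp
      exact this
    obtain ⟨a, ha⟩ := h1.exists
    obtain ⟨b, hb, hab⟩ := (h1.and (hv' S (eventually_gt_atTop a))).exists
    exact hab.ne (htinj _ _ (ha.trans hb.symm))
  · intro S S' hne
    rw [Set.disjoint_left]
    rintro _ ⟨p, rfl⟩ ⟨p', hp⟩
    have hp : umul p' ((v S').map t) = umul p ((v S).map t) := hp
    have : ∃ A, A ∈ v S ∧ A ∉ v S' := by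
      by_contra! hc
      exact hne (hv (Ultrafilter.eq_of_le (fun A hA => by
        by_contra hA'
        exact Ultrafilter.compl_mem_iff_notMem.1 (hc _ (Ultrafilter.compl_mem_iff_notMem.2 hA')) hA)))
    obtain ⟨A, hA, hA'⟩ := this
    rw [← Ultrafilter.compl_mem_iff_notMem] at hA'
    let U : Set K → Set G := fun A => {g | ∃ b a, b ≤ a ∧ a ∈ A ∧ g = s b * t a}
    have hU : ∀ p S A, A ∈ v S → U A ∈ umul p ((v S).map t) := by
      intro p S A hA
      refine mem_umul _ _ _ fun g => ?_
      change ∀ᶠ a in (v S : Filter K), g * t a ∈ U A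
      filter_upwards [hA, hv' S (eventually_ge_atTop (s.symm g))] with a ha hga
      exact ⟨s.symm g, a, hga, ha, by simp⟩
    have h1 := hU p S A hA
    have h2 := hU p' S' Aᶜ hA'
    rw [hp] at h2
    obtain ⟨g, ⟨b, a, hba, ha, rfl⟩, ⟨c, d, hcd, hd, h⟩⟩ :=
      Ultrafilter.nonempty_of_mem (inter_mem h1 h2)
    rcases lt_trichotomy a d with had | had | had
    · exact ht d a had c hcd b (hba.trans had.le) h.symm
    · exact hd (had ▸ ha)
    · exact ht a d had b hba c (hcd.trans had.le) h
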